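/- Let ((v_k(t))_{k≥1,t∈[0,T]}, r) be a solution of the integrated Burgers control problem such that Σ_{k≥1} v_k(t) = 1 for every t ∈ [0,T], with 0 < Σ_{k≥1} k v_k(0) < ∞ and Σ_{k≥1} k³ v_k(0) < ∞, T ≥ T_gel := (Σ_k k v_k(0))^{−1}, and r(t) = 0 for all t ∈ [0, T_gel]. Then for every x̄ > 0 there exists a constant C < ∞ such that |∂_x E(T_gel, x)| ≤ C·x^{−1/2} for all x ∈ (0, x̄], where E(t,x) := −(∂_x V(t,x))³ / ∂_x² V(t,x). -/

import Mathlib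

open MeasureTheory Filter Topology Set

/-- The generating function of the time-dependent cluster size distribution
`(v_k(t))_{k ≥ 1}`: `V(t,x) = ∑_{k≥1} v_k(t) e^(−kx) − 1`. -/
noncomputable def genFun (v : ℕ → ℝ → ℝ) (t x : ℝ) : ℝ :=
  (∑' k : ℕ, v (k + 1) t * Real.exp (-((k : ℝ) + 1) * x)) - 1

/-- `(v, r)` is a solution of the integrated Burgers control problem on `[0, T]`:
the `v_k(t)` are nonnegative with total mass at most one, `r` is nondecreasing on
`[0, T]` with `r 0 = 0`, `r T ≤ 1 + T/2`, and the generating function satisfies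
`V(t,x) − V(0,x) + ∫₀ᵗ V(s,x)·∂ₓV(s,x) ds = e^(−x)·r(t)` for `t ∈ [0,T]`, `x > 0`. -/
def IsBurgersSolution (T : ℝ) (v : ℕ → ℝ → ℝ) (r : ℝ → ℝ) : Prop :=
  (∀ k, 1 ≤ k → ∀ t ∈ Set.Icc (0:ℝ) T, 0 ≤ v k t) ∧
  (∀ t ∈ Set.Icc (0:ℝ) T, Summable (fun k : ℕ => v (k + 1) t)) ∧
  (∀ t ∈ Set.Icc (0:ℝ) T, (∑' k : ℕ, v (k + 1) t) ≤ 1) ∧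
  MonotoneOn r (Set.Icc 0 T) ∧
  r 0 = 0 ∧
  (∀ t ∈ Set.Icc (0:ℝ) T, 0 ≤ r t) ∧
  r T ≤ 1 + T / 2 ∧
  (∀ t ∈ Set.Icc (0:ℝ) T, ∀ x : ℝ, 0 < x →
    genFun v t x - genFun v 0 x
        + ∫ s in (0:ℝ)..t, genFun v s x * deriv (genFun v s) x
      = Real.exp (-x) * r t)

/-- `E(t,x) = −(∂ₓV(t,x))³ / ∂ₓ²V(t,x)`. -/
noncomputable def EFun (v : ℕ → ℝ → ℝ) (t x : ℝ) : ℝ :=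
  -(deriv (genFun v t) x) ^ 3 / iteratedDeriv 2 (genFun v t) x


/-- moments -/
noncomputable def DD (a : ℕ → ℝ) (j : ℕ) (x : ℝ) : ℝ :=
  ∑' k : ℕ, ((k : ℝ) + 1) ^ j * a k * Real.exp (-((k : ℝ) + 1) * x)

lemma pow_mul_exp_le (z d : ℝ) (hz : 0 ≤ z) (hd : 0 < d) (j : ℕ) :
    z ^ j * Real.exp (-z * d) ≤ (j.factorial : ℝ) / d ^ j := by
  have h := Real.pow_div_factorial_le_exp (z * d) (by positivity) j
  have hf : (0:ℝ) < j.factorial := by positivity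
  rw [div_le_iff₀ hf, mul_pow] at h
  rw [le_div_iff₀ (by positivity), neg_mul, Real.exp_neg]
  have he := Real.exp_pos (z * d)
  rw [mul_assoc, mul_comm (_⁻¹), ← mul_assoc, ← div_eq_mul_inv, div_le_iff₀ he]
  linarith

section moments
variable {a : ℕ → ℝ}

lemma term_le (ha : ∀ k, 0 ≤ a k) (j k : ℕ) {d x : ℝ} (hd : 0 < d) (hx : d ≤ x) :
    ((k : ℝ) + 1) ^ j * a k * Real.exp (-((k : ℝ) + 1) * x) ≤
      (j.factorial : ℝ) / d ^ j * a k := by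
  have h := pow_mul_exp_le ((k : ℝ) + 1) d (by positivity) hd j
  have h2 : Real.exp (-((k : ℝ) + 1) * x) ≤ Real.exp (-((k : ℝ) + 1) * d) := by
    apply Real.exp_le_exp.2
    have : (0:ℝ) ≤ (k:ℝ) + 1 := by positivity
    nlinarith
  have h3 := ha k
  calc ((k : ℝ) + 1) ^ j * a k * Real.exp (-((k : ℝ) + 1) * x)
      ≤ ((k : ℝ) + 1) ^ j * a k * Real.exp (-((k : ℝ) + 1) * d) := by gcongr
    _ = (((k : ℝ) + 1) ^ j * Real.exp (-((k : ℝ) + 1) * d)) * a k := by ring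
    _ ≤ _ := by gcongr

lemma term_nonneg (ha : ∀ k, 0 ≤ a k) (j k : ℕ) (x : ℝ) :
    0 ≤ ((k : ℝ) + 1) ^ j * a k * Real.exp (-((k : ℝ) + 1) * x) := by
  have h3 := ha k
  positivity

lemma DD_summable (ha : ∀ k, 0 ≤ a k) (hs : HasSum a 1) (j : ℕ) {x : ℝ} (hx : 0 < x) :
    Summable (fun k : ℕ => ((k : ℝ) + 1) ^ j * a k * Real.exp (-((k : ℝ) + 1) * x)) :=
  Summable.of_nonneg_of_le (fun k => term_nonneg ha j k x) (fun k => term_le ha j k hx le_rfl)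
    (hs.summable.mul_left _)

lemma DD_nonneg (ha : ∀ k, 0 ≤ a k) (j : ℕ) (x : ℝ) : 0 ≤ DD a j x :=
  tsum_nonneg (fun k => term_nonneg ha j k x)

lemma DD_le (ha : ∀ k, 0 ≤ a k) (hs : HasSum a 1) (j : ℕ) {d x : ℝ} (hd : 0 < d) (hx : d ≤ x) :
    DD a j x ≤ (j.factorial : ℝ) / d ^ j := by
  have h := Summable.tsum_le_tsum (fun k => term_le ha j k hd hx)
    (DD_summable ha hs j (hd.trans_le hx)) (hs.summable.mul_left _)
  rw [tsum_mul_left, hs.tsum_eq, mul_one] at h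
  exact h

lemma DD_hasDerivAt (ha : ∀ k, 0 ≤ a k) (hs : HasSum a 1) (j : ℕ) {x : ℝ} (hx : 0 < x) :
    HasDerivAt (DD a j) (-(DD a (j+1) x)) x := by
  have hd : 0 < x / 2 := by positivity
  have := hasDerivAt_tsum_of_isPreconnected
    (g := fun (k : ℕ) (y : ℝ) => ((k : ℝ) + 1) ^ j * a k * Real.exp (-((k : ℝ) + 1) * y))
    (g' := fun (k : ℕ) (y : ℝ) =>
      -(((k : ℝ) + 1) ^ (j+1) * a k * Real.exp (-((k : ℝ) + 1) * y)))
    (u := fun k => ((j+1).factorial : ℝ) / (x/2) ^ (j+1) * a k) (t := Ioi (x/2)) (y₀ := x) (y := x)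
    (hs.summable.mul_left _) isOpen_Ioi isPreconnected_Ioi ?_ ?_ ?_ (DD_summable ha hs j hx) ?_
  · rw [tsum_neg] at this
    exact this
  · intro k y hy
    have h1 : HasDerivAt (fun y : ℝ => -((k : ℝ) + 1) * y) (-((k : ℝ) + 1)) y := by
      simpa using (hasDerivAt_id y).const_mul (-((k : ℝ) + 1))
    exact (h1.exp.const_mul (((k : ℝ) + 1) ^ j * a k)).congr_deriv (by ring)
  · intro k y hy
    rw [norm_neg, Real.norm_of_nonneg (term_nonneg ha _ k y)]
    exact term_le ha _ k hd (le_of_lt hy)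
  · simp only [mem_Ioi]; linarith
  · simp only [mem_Ioi]; linarith

lemma DD_lip (ha : ∀ k, 0 ≤ a k) (hs : HasSum a 1) (j : ℕ) {d x y : ℝ} (hd : 0 < d) (hx : d ≤ x)
    (hy : d ≤ y) : |DD a j y - DD a j x| ≤ ((j+1).factorial : ℝ) / d ^ (j+1) * |y - x| := by
  refine Convex.norm_image_sub_le_of_norm_hasDerivWithin_le (s := Ici d)
    (f' := fun z => -(DD a (j+1) z))
    (fun z hz => (DD_hasDerivAt ha hs j (hd.trans_le hz)).hasDerivWithinAt) ?_ (convex_Ici d) hx hy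
  intro z hz
  rw [norm_neg, Real.norm_of_nonneg (DD_nonneg ha _ z)]
  exact DD_le ha hs _ hd hz

lemma DD_taylor (ha : ∀ k, 0 ≤ a k) (hs : HasSum a 1) {d x y : ℝ} (hd : 0 < d) (hx : d ≤ x)
    (hy : d ≤ y) : |DD a 0 y - DD a 0 x + DD a 1 x * (y - x)| ≤ 2 / d ^ 2 * |y - x| ^ 2 := by
  have := Convex.norm_image_sub_le_of_norm_hasDerivWithin_le (s := uIcc x y)
    (f := fun z => DD a 0 z + DD a 1 x * z) (C := 2 / d^2 * |y - x|) (x := x) (y := y)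
    (f' := fun z => -(DD a 1 z) + DD a 1 x) ?_ ?_ (convex_uIcc x y) left_mem_uIcc right_mem_uIcc
  · rw [Real.norm_eq_abs, Real.norm_eq_abs] at this
    calc _ = |DD a 0 y + DD a 1 x * y - (DD a 0 x + DD a 1 x * x)| := by congr 1; ring
      _ ≤ _ := this
      _ = _ := by ring
  · intro z hz
    have hz' : d ≤ z := (le_min hx hy).trans hz.1
    refine HasDerivAt.hasDerivWithinAt ?_
    have h1 := (hasDerivAt_id z).const_mul (DD a 1 x)
    rw [mul_one] at h1
    exact (DD_hasDerivAt ha hs 0 (hd.trans_le hz')).add h1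
  · intro z hz
    have hz' : d ≤ z := (le_min hx hy).trans hz.1
    have h := DD_lip ha hs 1 hd hz' hx
    have h2 : |x - z| ≤ |y - x| := by
      rw [abs_sub_comm]; exact abs_sub_left_of_mem_uIcc hz
    rw [Real.norm_eq_abs, neg_add_eq_sub]
    refine h.trans ?_
    norm_num [Nat.factorial]
    gcongr

end moments

lemma primitive_aesm (f : ℝ → ℝ) (τ M : ℝ) (hM : 0 ≤ M) (hf : ∀ s ∈ Icc 0 τ, |f s| ≤ M) :
    AEStronglyMeasurable (fun t => ∫ s in (0:ℝ)..t, f s) (volume.restrict (Icc 0 τ)) := by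
  set S : Set ℝ := {t | t ∈ Icc 0 τ ∧ IntervalIntegrable f volume 0 t} with hS
  have hSord : S.OrdConnected := by
    refine ⟨fun x hx y hy z hz => ?_⟩
    refine ⟨⟨hx.1.1.trans hz.1, hz.2.trans hy.1.2⟩, hy.2.mono_set ?_⟩
    rw [uIcc_of_le (hx.1.1.trans hz.1), uIcc_of_le hy.1.1]
    exact Icc_subset_Icc_right hz.2
  have hSm : MeasurableSet S := hSord.measurableSet
  have hc : ContinuousOn (fun t => ∫ s in (0:ℝ)..t, f s) S := by
    refine LipschitzOnWith.continuousOn (K := ⟨M, hM⟩) (LipschitzOnWith.of_dist_le_mul ?_)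
    intro x hx y hy
    rw [Real.dist_eq, Real.dist_eq, intervalIntegral.integral_interval_sub_left hx.2 hy.2]
    rw [← Real.norm_eq_abs (∫ s in y..x, f s)]
    refine intervalIntegral.norm_integral_le_of_norm_le_const (C := M) ?_
    intro s hs
    have hs' := uIoc_subset_uIcc hs
    refine hf s ⟨(le_min hy.1.1 hx.1.1).trans hs'.1, hs'.2.trans (max_le hy.1.2 hx.1.2)⟩
  have h1 : AEStronglyMeasurable (S.indicator (fun t => ∫ s in (0:ℝ)..t, f s))
      (volume.restrict (Icc 0 τ)) := by
    refine AEStronglyMeasurable.restrict ?_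
    exact (aestronglyMeasurable_indicator_iff hSm).2 (hc.aestronglyMeasurable hSm)
  refine h1.congr ?_
  filter_upwards [ae_restrict_mem measurableSet_Icc] with t ht
  by_cases h : t ∈ S
  · simp [h]
  · rw [indicator_of_notMem h, intervalIntegral.integral_undef]
    exact fun h' => h ⟨ht, h'⟩

section pde
variable {a : ℝ → ℕ → ℝ} {τ : ℝ}

lemma V_abs_le {b : ℕ → ℝ} (ha : ∀ k, 0 ≤ b k) (hs : HasSum b 1) {x : ℝ} (hx : 0 < x) :
    |DD b 0 x - 1| ≤ 1 := by
  have h1 := DD_nonneg ha 0 x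
  have h2 := DD_le ha hs 0 hx le_rfl
  norm_num at h2
  rw [abs_le]; constructor <;> linarith

lemma F_abs_le {b : ℕ → ℝ} (ha : ∀ k, 0 ≤ b k) (hs : HasSum b 1) {d x : ℝ} (hd : 0 < d)
    (hx : d ≤ x) : |(DD b 0 x - 1) * (-(DD b 1 x))| ≤ 1 / d := by
  have h0 := V_abs_le ha hs (hd.trans_le hx)
  have h1 := DD_nonneg ha 1 x
  have h2 := DD_le ha hs 1 hd hx
  norm_num at h2
  rw [abs_mul, abs_neg, abs_of_nonneg h1, one_div]
  calc |DD b 0 x - 1| * DD b 1 x ≤ 1 * DD b 1 x := by gcongr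
    _ ≤ _ := by linarith

lemma F_integrable (ha : ∀ t ∈ Icc 0 τ, ∀ k, 0 ≤ a t k) (hs : ∀ t ∈ Icc 0 τ, HasSum (a t) 1)
    (heq : ∀ t ∈ Icc 0 τ, ∀ x : ℝ, 0 < x → (DD (a t) 0 x - 1) - (DD (a 0) 0 x - 1)
      + ∫ s in (0:ℝ)..t, (DD (a s) 0 x - 1) * (-(DD (a s) 1 x)) = 0) {x : ℝ} (hx : 0 < x) :
    IntegrableOn (fun s => (DD (a s) 0 x - 1) * (-(DD (a s) 1 x))) (Icc 0 τ) := by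
  have hV : ∀ x : ℝ, 0 < x → AEStronglyMeasurable (fun s => DD (a s) 0 x)
      (volume.restrict (Icc 0 τ)) := by
    intro x hx
    have h := primitive_aesm (fun s => (DD (a s) 0 x - 1) * (-(DD (a s) 1 x))) τ (1/x)
      (by positivity) (fun s hs' => F_abs_le (ha s hs') (hs s hs') hx le_rfl)
    refine ((aestronglyMeasurable_const (b := DD (a 0) 0 x)).sub h).congr ?_
    filter_upwards [ae_restrict_mem measurableSet_Icc] with t ht
    have := heq t ht x hx
    simp only [Pi.sub_apply]
    linarith
  have hVx : AEStronglyMeasurable (fun s => -(DD (a s) 1 x)) (volume.restrict (Icc 0 τ)) := by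
    refine aestronglyMeasurable_of_tendsto_ae atTop
      (f := fun (n : ℕ) s => ((n:ℝ)+1) * (DD (a s) 0 (x + ((n:ℝ)+1)⁻¹) - DD (a s) 0 x)) ?_ ?_
    · intro n
      exact ((hV _ (by positivity)).sub (hV x hx)).const_mul _
    · filter_upwards [ae_restrict_mem measurableSet_Icc] with t ht
      have h := (DD_hasDerivAt (ha t ht) (hs t ht) 0 hx).tendsto_slope_zero
      have h2 : Tendsto (fun n : ℕ => ((n:ℝ)+1)⁻¹) atTop (𝓝[≠] 0) := by
        refine tendsto_nhdsWithin_iff.2 ⟨?_, Eventually.of_forall fun n => ?_⟩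
        · simpa using tendsto_one_div_add_atTop_nhds_zero_nat (𝕜 := ℝ)
        · have : (0:ℝ) < ((n:ℝ)+1)⁻¹ := by positivity
          exact this.ne'
      refine (h.comp h2).congr fun n => ?_
      simp
  refine Integrable.of_bound ?_ (1/x) ?_
  · exact ((hV x hx).sub aestronglyMeasurable_const).mul hVx
  · filter_upwards [ae_restrict_mem measurableSet_Icc] with t ht
    exact F_abs_le (ha t ht) (hs t ht) hx le_rfl

lemma V_lip (ha : ∀ t ∈ Icc 0 τ, ∀ k, 0 ≤ a t k) (hs : ∀ t ∈ Icc 0 τ, HasSum (a t) 1)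
    (heq : ∀ t ∈ Icc 0 τ, ∀ x : ℝ, 0 < x → (DD (a t) 0 x - 1) - (DD (a 0) 0 x - 1)
      + ∫ s in (0:ℝ)..t, (DD (a s) 0 x - 1) * (-(DD (a s) 1 x)) = 0) {d x : ℝ} (hd : 0 < d)
    (hx : d ≤ x) {s t : ℝ} (hs' : s ∈ Icc 0 τ) (ht : t ∈ Icc 0 τ) :
    |DD (a t) 0 x - DD (a s) 0 x| ≤ 1 / d * |t - s| := by
  have hx0 := hd.trans_le hx
  have hI := F_integrable ha hs heq hx0
  have hint : ∀ u ∈ Icc 0 τ, IntervalIntegrable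
      (fun s => (DD (a s) 0 x - 1) * (-(DD (a s) 1 x))) volume 0 u := by
    intro u hu
    rw [intervalIntegrable_iff_integrableOn_Icc_of_le hu.1]
    exact hI.mono_set (Icc_subset_Icc_right hu.2)
  have h1 := heq s hs' x hx0
  have h2 := heq t ht x hx0
  have h3 := intervalIntegral.integral_interval_sub_left (hint s hs') (hint t ht)
  have h4 : DD (a t) 0 x - DD (a s) 0 x =
      ∫ u in t..s, (DD (a u) 0 x - 1) * (-(DD (a u) 1 x)) := by rw [← h3]; linarith
  rw [h4, abs_sub_comm t s]
  rw [← Real.norm_eq_abs (∫ u in t..s, _)]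
  refine intervalIntegral.norm_integral_le_of_norm_le_const ?_
  intro u hu
  have hu' := uIoc_subset_uIcc hu
  have hu2 : u ∈ Icc 0 τ :=
    ⟨(le_min ht.1 hs'.1).trans hu'.1, hu'.2.trans (max_le ht.2 hs'.2)⟩
  exact F_abs_le (ha u hu2) (hs u hu2) hd hx

/-- continuity in time of the first spatial derivative -/
lemma D1_cont (ha : ∀ t ∈ Icc 0 τ, ∀ k, 0 ≤ a t k) (hs : ∀ t ∈ Icc 0 τ, HasSum (a t) 1)
    (heq : ∀ t ∈ Icc 0 τ, ∀ x : ℝ, 0 < x → (DD (a t) 0 x - 1) - (DD (a 0) 0 x - 1)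
      + ∫ s in (0:ℝ)..t, (DD (a s) 0 x - 1) * (-(DD (a s) 1 x)) = 0) {x : ℝ} (hx : 0 < x) :
    ContinuousOn (fun t => DD (a t) 1 x) (Icc 0 τ) := by
  intro s hs'
  rw [Metric.continuousWithinAt_iff]
  intro ε hε
  -- choose h with 4/x^2 h ≤ ε/2
  obtain ⟨h, hh0, hh⟩ : ∃ h : ℝ, 0 < h ∧ 4 / x ^ 2 * h = ε / 2 :=
    ⟨ε / 2 * (x ^ 2 / 4), by positivity, by field_simp⟩
  refine ⟨ε / 2 * h * x / 2, by positivity, ?_⟩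
  intro t ht hd
  rw [Real.dist_eq] at hd ⊢
  have hxh : x ≤ x + h := by linarith
  have e1 := DD_taylor (ha t ht) (hs t ht) hx le_rfl hxh
  have e2 := DD_taylor (ha s hs') (hs s hs') hx le_rfl hxh
  have e3 := V_lip ha hs heq hx le_rfl hs' ht
  have e4 := V_lip ha hs heq hx hxh hs' ht
  rw [add_sub_cancel_left, abs_of_pos hh0] at e1 e2
  have e5 : 2 / x ^ 2 * h ^ 2 = h * (ε / 4) := by
    have : 2 / x ^ 2 * h ^ 2 = h * (4 / x ^ 2 * h) / 2 := by ring
    rw [this, hh]; ring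
  have e6 : 1 / x * |t - s| < h * (ε / 4) := by
    calc 1 / x * |t - s| < 1 / x * (ε / 2 * h * x / 2) := by gcongr
      _ = _ := by field_simp; norm_num
  rw [e5] at e1 e2
  rw [abs_le] at e1 e2 e3 e4
  have : h * |DD (a t) 1 x - DD (a s) 1 x| < h * ε := by
    rw [← abs_of_pos hh0, ← abs_mul, abs_of_pos hh0, abs_lt]
    constructor <;> nlinarith
  exact lt_of_mul_lt_mul_left this hh0.le

lemma char_deriv (ha : ∀ t ∈ Icc 0 τ, ∀ k, 0 ≤ a t k) (hs : ∀ t ∈ Icc 0 τ, HasSum (a t) 1)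
    (heq : ∀ t ∈ Icc 0 τ, ∀ x : ℝ, 0 < x → (DD (a t) 0 x - 1) - (DD (a 0) 0 x - 1)
      + ∫ s in (0:ℝ)..t, (DD (a s) 0 x - 1) * (-(DD (a s) 1 x)) = 0) {x0 c t : ℝ}
    (ht : t ∈ Ioo 0 τ) (hx : 0 < x0 + t * c) :
    HasDerivAt (fun s => DD (a s) 0 (x0 + s * c) - 1)
      ((DD (a t) 0 (x0 + t * c) - 1 - c) * DD (a t) 1 (x0 + t * c)) t := by
  set x := x0 + t * c with hxdef
  have htI : t ∈ Icc 0 τ := Ioo_subset_Icc_self ht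
  have hnb : Icc 0 τ ∈ 𝓝 t := Icc_mem_nhds ht.1 ht.2
  have hV0 : ContinuousAt (fun s => DD (a s) 0 x) t := by
    have : ContinuousOn (fun s => DD (a s) 0 x) (Icc 0 τ) :=
      LipschitzOnWith.continuousOn (K := ⟨1/x, by positivity⟩)
        (LipschitzOnWith.of_dist_le_mul fun u hu w hw => V_lip ha hs heq hx le_rfl hw hu)
    exact this.continuousAt hnb
  have hD1 : ContinuousAt (fun s => DD (a s) 1 x) t :=
    (D1_cont ha hs heq hx).continuousAt hnb
  have hI := F_integrable ha hs heq hx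
  -- time derivative
  have hA : HasDerivAt (fun s => DD (a s) 0 x) (-((DD (a t) 0 x - 1) * (-(DD (a t) 1 x)))) t := by
    have h1 := intervalIntegral.integral_hasDerivAt_right
      (f := fun s => (DD (a s) 0 x - 1) * (-(DD (a s) 1 x))) (a := 0) (b := t) ?_ ?_ ?_
    · refine ((h1.neg).const_add (DD (a 0) 0 x)).congr_of_eventuallyEq ?_
      filter_upwards [hnb] with s hs'
      have := heq s hs' x hx
      simp only [Pi.neg_apply]
      linarith
    · rw [intervalIntegrable_iff_integrableOn_Icc_of_le htI.1]
      exact hI.mono_set (Icc_subset_Icc_right htI.2)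
    · exact ⟨Icc 0 τ, hnb, hI.aestronglyMeasurable⟩
    · exact (hV0.sub continuousAt_const).mul hD1.neg
  -- space increment
  have hB : HasDerivAt (fun s => DD (a s) 0 (x0 + s * c) - DD (a s) 0 x)
      (-(DD (a t) 1 x) * c) t := by
    have hr1 : HasDerivAt (fun s => DD (a s) 1 x * (x0 + s * c - x)) (DD (a t) 1 x * c) t := by
      rw [hasDerivAt_iff_tendsto_slope]
      have : Tendsto (fun s => DD (a s) 1 x * c) (𝓝[≠] t) (𝓝 (DD (a t) 1 x * c)) :=
        (hD1.mul continuousAt_const).tendsto.mono_left nhdsWithin_le_nhds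
      refine this.congr' ?_
      filter_upwards [self_mem_nhdsWithin] with s hs'
      have : s - t ≠ 0 := sub_ne_zero.2 hs'
      rw [slope_def_field, hxdef]
      field_simp
      ring
    have hr2 : HasDerivAt (fun s => DD (a s) 0 (x0 + s * c) - DD (a s) 0 x
        + DD (a s) 1 x * (x0 + s * c - x)) 0 t := by
      have hO : (fun s => DD (a s) 0 (x0 + s * c) - DD (a s) 0 x
        + DD (a s) 1 x * (x0 + s * c - x)) =O[𝓝 t] fun s => (s - t) ^ 2 := by
        refine Asymptotics.IsBigO.of_bound (2 / (x/2)^2 * c ^ 2) ?_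
        have hcont : ContinuousAt (fun s => x0 + s * c) t := by fun_prop
        have hev : ∀ᶠ s in 𝓝 t, x / 2 < x0 + s * c :=
          hcont.eventually (lt_mem_nhds (show x / 2 < x0 + t * c by rw [← hxdef]; linarith))
        filter_upwards [hnb, hev] with s hs' hs2
        have := DD_taylor (ha s hs') (hs s hs') (d := x/2) (x := x) (y := x0 + s * c)
          (by positivity) (by linarith) hs2.le
        rw [Real.norm_eq_abs, Real.norm_eq_abs]
        refine this.trans (le_of_eq ?_)
        rw [sq_abs, abs_of_nonneg (sq_nonneg _), hxdef]
        ring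
      rw [hasDerivAt_iff_isLittleO]
      have hl : (fun s => (s - t) ^ 2) =o[𝓝 t] fun s => s - t := by
        have := Asymptotics.isLittleO_pow_sub_sub (E' := ℝ) t (m := 2) (by norm_num)
        simpa [Real.norm_eq_abs, sq_abs] using this
      refine (hO.trans_isLittleO hl).congr_left ?_
      intro s
      simp [← hxdef]
    refine ((hr2.sub hr1).congr_deriv (by ring)).congr_of_eventuallyEq ?_
    filter_upwards with s
    simp
  refine (((hA.add hB).sub_const 1).congr_deriv (by ring)).congr_of_eventuallyEq ?_
  filter_upwards with s
  simp

lemma characteristics (ha : ∀ t ∈ Icc 0 τ, ∀ k, 0 ≤ a t k) (hs : ∀ t ∈ Icc 0 τ, HasSum (a t) 1)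
    (heq : ∀ t ∈ Icc 0 τ, ∀ x : ℝ, 0 < x → (DD (a t) 0 x - 1) - (DD (a 0) 0 x - 1)
      + ∫ s in (0:ℝ)..t, (DD (a s) 0 x - 1) * (-(DD (a s) 1 x)) = 0) {x0 c : ℝ}
    (hτ : 0 ≤ τ) (hc : c = DD (a 0) 0 x0 - 1) (hc0 : c ≤ 0) 
    (hx : 0 < x0 + τ * c) :
    DD (a τ) 0 (x0 + τ * c) - 1 = c := by
  set d := x0 + τ * c with hd
  have hge : ∀ t ∈ Icc 0 τ, d ≤ x0 + t * c := by
    intro t ht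
    have := mul_le_mul_of_nonpos_right ht.2 hc0
    linarith
  set w : ℝ → ℝ := fun s => DD (a s) 0 (x0 + s * c) - 1 - c with hw
  have hwc : ContinuousOn w (Icc 0 τ) := by
    refine LipschitzOnWith.continuousOn (K := ⟨1/d + 1/d * |c|, by positivity⟩)
        (LipschitzOnWith.of_dist_le_mul fun u hu s hs' => ?_)
    rw [Real.dist_eq, Real.dist_eq]
    have h1 := V_lip ha hs heq hx (hge u hu) hs' hu
    have h2 := DD_lip (ha s hs') (hs s hs') 0 hx (hge s hs') (hge u hu)
    have h3 : x0 + u * c - (x0 + s * c) = (u - s) * c := by ring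
    rw [h3, abs_mul] at h2
    norm_num at h2
    calc |w u - w s| = |(DD (a u) 0 (x0 + u * c) - DD (a s) 0 (x0 + u * c))
          + (DD (a s) 0 (x0 + u * c) - DD (a s) 0 (x0 + s * c))| := by
            congr 1; simp only [hw]; ring
      _ ≤ _ := abs_add_le _ _
      _ ≤ 1 / d * |u - s| + d⁻¹ * (|u - s| * |c|) := add_le_add h1 h2
      _ = (1/d + 1/d * |c|) * |u - s| := by ring
  have hwd : ∀ t ∈ Ioo 0 τ, HasDerivAt (fun s => w s ^ 2 * Real.exp (-(2 / d) * s))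
      (2 * w t ^ 2 * Real.exp (-(2 / d) * t) * (DD (a t) 1 (x0 + t * c) - 1 / d)) t := by
    intro t ht
    have h1 := (char_deriv ha hs heq ht (hx.trans_le (hge t (Ioo_subset_Icc_self ht)))).sub_const c
    have h2 : HasDerivAt (fun s : ℝ => -(2 / d) * s) (-(2/d)) t := by
      simpa using (hasDerivAt_id t).const_mul (-(2/d))
    refine ((h1.pow 2).mul h2.exp).congr_deriv ?_
    simp only [hw, Pi.pow_apply]
    ring
  have hanti : AntitoneOn (fun s => w s ^ 2 * Real.exp (-(2 / d) * s)) (Icc 0 τ) := by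
    refine antitoneOn_of_deriv_nonpos (convex_Icc 0 τ) ?_ ?_ ?_
    · exact (hwc.pow 2).mul (by fun_prop)
    · rw [interior_Icc]
      exact fun t ht => (hwd t ht).differentiableAt.differentiableWithinAt
    · rw [interior_Icc]
      intro t ht
      rw [(hwd t ht).deriv]
      have htI := Ioo_subset_Icc_self ht
      have h := DD_le (ha t htI) (hs t htI) 1 hx (hge t htI)
      norm_num at h
      refine mul_nonpos_of_nonneg_of_nonpos (by positivity) ?_
      rw [one_div]; linarith
  have hfin := hanti (left_mem_Icc.2 hτ) (right_mem_Icc.2 hτ) hτ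
  have hw0 : w 0 = 0 := by simp [hw, hc]
  simp only [hw0] at hfin
  have he := Real.exp_pos (-(2/d) * τ)
  have hsq : w τ ^ 2 ≤ 0 := by
    by_contra hcon
    push Not at hcon
    have := mul_pos hcon he
    norm_num at hfin
    simp only [neg_mul] at this
    linarith
  have : w τ = 0 := by nlinarith [sq_nonneg (w τ), pow_eq_zero_iff (M₀ := ℝ) (a := w τ) two_ne_zero, le_antisymm hsq (sq_nonneg _)]
  simp only [hw, ← hd] at this
  linarith

end pde

lemma genFun_eq (v : ℕ → ℝ → ℝ) (t : ℝ) :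
    genFun v t = fun x => DD (fun k => v (k+1) t) 0 x - 1 := by
  funext x
  simp [genFun, DD]

section fin
variable {b : ℕ → ℝ}

lemma uniq_deriv {f g : ℝ → ℝ} {f' g' y : ℝ} (hy : 0 < y) (h : ∀ z, 0 < z → f z = g z)
    (hf : HasDerivAt f f' y) (hg : HasDerivAt g g' y) : f' = g' := by
  refine hf.unique (hg.congr_of_eventuallyEq ?_)
  filter_upwards [Ioi_mem_nhds hy] with z hz
  exact h z hz

lemma genFun_deriv (v : ℕ → ℝ → ℝ) (t : ℝ) (ha : ∀ k, 0 ≤ v (k+1) t)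
    (hs : HasSum (fun k => v (k+1) t) 1) {x : ℝ} (hx : 0 < x) :
    deriv (genFun v t) x = -(DD (fun k => v (k+1) t) 1 x) := by
  rw [genFun_eq]
  exact ((DD_hasDerivAt (a := fun k => v (k+1) t) ha hs 0 hx).sub_const 1).deriv

lemma EFun_eq (v : ℕ → ℝ → ℝ) (t : ℝ) (ha : ∀ k, 0 ≤ v (k+1) t)
    (hs : HasSum (fun k => v (k+1) t) 1) {x : ℝ} (hx : 0 < x) :
    EFun v t x = DD (fun k => v (k+1) t) 1 x ^ 3 / DD (fun k => v (k+1) t) 2 x := by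
  have h2 : iteratedDeriv 2 (genFun v t) x = DD (fun k => v (k+1) t) 2 x := by
    rw [iteratedDeriv_succ, iteratedDeriv_one]
    have h := (DD_hasDerivAt (a := fun k => v (k+1) t) ha hs 1 hx).neg
    rw [neg_neg] at h
    refine (h.congr_of_eventuallyEq ?_).deriv
    filter_upwards [Ioi_mem_nhds hx] with z hz
    exact genFun_deriv v t ha hs hz
  rw [EFun, h2, genFun_deriv v t ha hs hx]
  ring

lemma DD_le_moment (ha : ∀ k, 0 ≤ b k) (hs : HasSum b 1) (j : ℕ)
    (hm : Summable (fun k : ℕ => ((k:ℝ)+1)^j * b k)) {x : ℝ} (hx : 0 < x) :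
    DD b j x ≤ ∑' k : ℕ, ((k:ℝ)+1)^j * b k := by
  refine Summable.tsum_le_tsum (fun k => ?_) (DD_summable ha hs j hx) hm
  have h1 := ha k
  refine mul_le_of_le_one_right (by positivity) (Real.exp_le_one_iff.2 ?_)
  have : (0:ℝ) ≤ ((k:ℝ)+1) * x := by positivity
  linarith

lemma phi_hasSum (ha : ∀ k, 0 ≤ b k) (hs : HasSum b 1)
    (hm : Summable (fun k : ℕ => ((k:ℝ)+1) * b k)) {y : ℝ} (hy : 0 < y) :
    HasSum (fun k : ℕ => b k * (((k:ℝ)+1) * y + Real.exp (-((k:ℝ)+1) * y) - 1))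
      ((∑' k : ℕ, ((k:ℝ)+1) * b k) * y + DD b 0 y - 1) := by
  have h := ((hm.hasSum.mul_right y).add (DD_summable ha hs 0 hy).hasSum).sub hs
  refine h.congr_fun ?_ |> fun h => h
  intro k
  ring

lemma phi_le (ha : ∀ k, 0 ≤ b k) (hs : HasSum b 1)
    (hm : Summable (fun k : ℕ => ((k:ℝ)+1) * b k))
    (hm2 : Summable (fun k : ℕ => ((k:ℝ)+1)^2 * b k)) {y : ℝ} (hy : 0 < y) :
    (∑' k : ℕ, ((k:ℝ)+1) * b k) * y + DD b 0 y - 1 ≤ (∑' k : ℕ, ((k:ℝ)+1)^2 * b k) * y ^ 2 := by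
  refine hasSum_le (fun k => ?_) (phi_hasSum ha hs hm hy) (hm2.hasSum.mul_right (y^2))
  have hz : 0 < ((k:ℝ)+1) * y := by positivity
  set z := ((k:ℝ)+1) * y with hzd
  have h1 : Real.exp (-((k:ℝ)+1) * y) ≤ 1 / (1 + z) := by
    rw [neg_mul, ← hzd, Real.exp_neg, one_div]
    gcongr
    linarith [Real.add_one_le_exp z]
  have h2 : 1 / (1 + z) ≤ 1 - z + z ^ 2 := by
    rw [div_le_iff₀ (by positivity)]
    nlinarith [pow_pos hz 3]
  calc b k * (z + Real.exp (-((k:ℝ)+1) * y) - 1) ≤ b k * z ^ 2 :=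
        mul_le_mul_of_nonneg_left (by linarith) (ha k)
    _ = _ := by rw [hzd]; ring

lemma phi_pos (ha : ∀ k, 0 ≤ b k) (hs : HasSum b 1)
    (hm : Summable (fun k : ℕ => ((k:ℝ)+1) * b k)) {k0 : ℕ} (hk : 0 < b k0) {y : ℝ} (hy : 0 < y) :
    0 < (∑' k : ℕ, ((k:ℝ)+1) * b k) * y + DD b 0 y - 1 := by
  have hterm : ∀ k : ℕ, 0 < ((k:ℝ)+1) * y + Real.exp (-((k:ℝ)+1) * y) - 1 := by
    intro k
    have hz : 0 < ((k:ℝ)+1) * y := by positivity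
    have := Real.add_one_lt_exp (x := -((k:ℝ)+1) * y) (by rw [neg_mul]; linarith)
    linarith
  have h := le_hasSum (phi_hasSum ha hs hm hy) k0
    (fun j _ => mul_nonneg (ha j) (hterm j).le)
  exact (mul_pos hk (hterm k0)).trans_le h

lemma p_ge (ha : ∀ k, 0 ≤ b k) (hs : HasSum b 1)
    (hm : Summable (fun k : ℕ => ((k:ℝ)+1) * b k)) (k0 : ℕ) {y Y : ℝ} (hy : 0 < y)
    (hyY : y ≤ Y) :
    b k0 * Real.exp (-Y) * y ≤ (∑' k : ℕ, ((k:ℝ)+1) * b k) - DD b 1 y := by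
  have hsum := hm.hasSum.sub (DD_summable ha hs 1 hy).hasSum
  have hterm : ∀ k : ℕ, b k * (1 - Real.exp (-y)) ≤
      ((k:ℝ)+1) * b k - ((k:ℝ)+1)^1 * b k * Real.exp (-((k:ℝ)+1) * y) := by
    intro k
    have h1 : Real.exp (-((k:ℝ)+1) * y) ≤ Real.exp (-y) := by
      apply Real.exp_le_exp.2
      have : (0:ℝ) ≤ k * y := by positivity
      linarith
    have h2 : Real.exp (-y) ≤ 1 := Real.exp_le_one_iff.2 (by linarith)
    have h3 := ha k
    have hk : (0:ℝ) ≤ k := by positivity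
    calc b k * (1 - Real.exp (-y)) ≤ b k * ((k+1) * (1 - Real.exp (-((k:ℝ)+1) * y))) := by
          refine mul_le_mul_of_nonneg_left ?_ h3
          nlinarith
      _ = _ := by ring
  have h4 : 0 ≤ 1 - Real.exp (-y) := by
    linarith [Real.exp_le_one_iff.2 (show -y ≤ 0 by linarith)]
  have h := le_hasSum hsum k0 (fun j _ => (mul_nonneg (ha j) h4).trans (hterm j))
  refine le_trans ?_ ((hterm k0).trans h)
  rw [mul_assoc]
  refine mul_le_mul_of_nonneg_left ?_ (ha k0)
  have h5 : Real.exp (-Y) ≤ Real.exp (-y) := Real.exp_le_exp.2 (by linarith)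
  have h6 := Real.add_one_le_exp y
  have h7 : Real.exp (-y) * Real.exp y = 1 := by rw [← Real.exp_add]; simp
  have h8 := Real.exp_pos (-y)
  nlinarith

lemma DD_ge (ha : ∀ k, 0 ≤ b k) (hs : HasSum b 1) (j k0 : ℕ) {y Y : ℝ} (hy : 0 < y)
    (hyY : y ≤ Y) : b k0 * Real.exp (-((k0:ℝ)+1) * Y) ≤ DD b j y := by
  have h := le_hasSum (DD_summable ha hs j hy).hasSum k0 (fun k _ => term_nonneg ha j k y)
  refine le_trans ?_ h
  have h0 := ha k0
  have hk : (0:ℝ) ≤ k0 := by positivity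
  have h1 : (1:ℝ) ≤ ((k0:ℝ)+1)^j := one_le_pow₀ (by linarith)
  have h2 : Real.exp (-((k0:ℝ)+1) * Y) ≤ Real.exp (-((k0:ℝ)+1) * y) := by
    apply Real.exp_le_exp.2
    nlinarith
  calc b k0 * Real.exp (-((k0:ℝ)+1) * Y) = 1 * b k0 * Real.exp (-((k0:ℝ)+1) * Y) := by ring
    _ ≤ _ := by gcongr

end fin

/-- for a conservative solution with `0 < ∑ k v_k(0) < ∞`,
`∑ k³ v_k(0) < ∞`, `T ≥ T_gel` and vanishing control on `[0, T_gel]`, the spatial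
derivative of `E` at the gelation time satisfies `|∂ₓE(T_gel, x)| ≤ C·x^(−1/2)`. -/
theorem EFun_deriv_bound_at_gelation (T : ℝ) (hT : 0 < T) (v : ℕ → ℝ → ℝ) (r : ℝ → ℝ)
    (Tgel : ℝ)
    (hsol : IsBurgersSolution T v r)
    (hcons : ∀ t ∈ Set.Icc (0:ℝ) T, HasSum (fun k : ℕ => v (k + 1) t) 1)
    (hm1 : Summable (fun k : ℕ => ((k : ℝ) + 1) * v (k + 1) 0))
    (hm1pos : 0 < ∑' k : ℕ, ((k : ℝ) + 1) * v (k + 1) 0)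
    (hm3 : Summable (fun k : ℕ => ((k : ℝ) + 1) ^ 3 * v (k + 1) 0))
    (hTgel : Tgel = (∑' k : ℕ, ((k : ℝ) + 1) * v (k + 1) 0)⁻¹)
    (hTgelT : Tgel ≤ T)
    (hr0 : ∀ t ∈ Set.Icc (0:ℝ) Tgel, r t = 0) :
    ∀ xbar : ℝ, 0 < xbar → ∃ C : ℝ, ∀ x ∈ Set.Ioc (0:ℝ) xbar,
      |deriv (fun y => EFun v Tgel y) x| ≤ C * x ^ (-(1:ℝ)/2) := by
  obtain ⟨hnn, -, -, -, -, -, -, heq⟩ := hsol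
  set a : ℝ → ℕ → ℝ := fun t k => v (k+1) t with hadef
  set m1 := ∑' k : ℕ, ((k : ℝ) + 1) * v (k + 1) 0 with hm1def
  have hτ : 0 < Tgel := by rw [hTgel]; positivity
  have hτm : Tgel * m1 = 1 := by rw [hTgel]; field_simp
  have hmem : ∀ t ∈ Icc 0 Tgel, t ∈ Icc 0 T := fun t ht => ⟨ht.1, ht.2.trans hTgelT⟩
  have ha : ∀ t ∈ Icc 0 Tgel, ∀ k, 0 ≤ a t k := fun t ht k => hnn (k+1) (by omega) t (hmem t ht)
  have hs : ∀ t ∈ Icc 0 Tgel, HasSum (a t) 1 := fun t ht => hcons t (hmem t ht)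
  have h0I : (0:ℝ) ∈ Icc 0 Tgel := ⟨le_rfl, hτ.le⟩
  have hτI : Tgel ∈ Icc 0 Tgel := ⟨hτ.le, le_rfl⟩
  have heq' : ∀ t ∈ Icc 0 Tgel, ∀ x : ℝ, 0 < x → (DD (a t) 0 x - 1) - (DD (a 0) 0 x - 1)
      + ∫ s in (0:ℝ)..t, (DD (a s) 0 x - 1) * (-(DD (a s) 1 x)) = 0 := by
    intro t ht x hx
    have h := heq t (hmem t ht) x hx
    rw [hr0 t ht, mul_zero, genFun_eq, genFun_eq] at h
    have hcg : ∫ s in (0:ℝ)..t, (DD (a s) 0 x - 1) * (-(DD (a s) 1 x)) =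
        ∫ s in (0:ℝ)..t, genFun v s x * deriv (genFun v s) x := by
      refine intervalIntegral.integral_congr fun s hs' => ?_
      rw [uIcc_of_le ht.1] at hs'
      have hsI : s ∈ Icc 0 Tgel := ⟨hs'.1, hs'.2.trans ht.2⟩
      rw [genFun_deriv v s (ha s hsI) (hs s hsI) hx, genFun_eq]
    rw [hcg]
    exact h
  -- a positive initial coefficient
  have hb := ha 0 h0I
  have hbs := hs 0 h0I
  obtain ⟨k0, hk0⟩ : ∃ k, 0 < a 0 k := by
    by_contra hcon
    push Not at hcon
    have : ∀ k, a 0 k = 0 := fun k => le_antisymm (hcon k) (hb k)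
    have hz := hbs.tsum_eq
    simp [this] at hz
  set b := a 0 with hbdef
  set u := a Tgel with hudef
  have hu := ha Tgel hτI
  have hus := hs Tgel hτI
  have hm1' : Summable (fun k : ℕ => ((k:ℝ)+1) * b k) := hm1
  have hm2 : Summable (fun k : ℕ => ((k:ℝ)+1)^2 * b k) := by
    refine Summable.of_nonneg_of_le (fun k => mul_nonneg (by positivity) (hb k)) (fun k => ?_) hm3
    refine mul_le_mul_of_nonneg_right ?_ (hb k)
    exact pow_le_pow_right₀ (by linarith [Nat.cast_nonneg (α := ℝ) k]) (by norm_num)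
  set m2 := ∑' k : ℕ, ((k:ℝ)+1)^2 * b k with hm2def
  set m3 := ∑' k : ℕ, ((k:ℝ)+1)^3 * b k with hm3def
  have hm2nn : 0 ≤ m2 := tsum_nonneg fun k => mul_nonneg (by positivity) (hb k)
  have hm3nn : 0 ≤ m3 := tsum_nonneg fun k => mul_nonneg (by positivity) (hb k)
  -- the characteristic map
  set φ : ℝ → ℝ := fun y => y + Tgel * (DD b 0 y - 1) with hφ
  have hφeq : ∀ y, φ y = Tgel * (m1 * y + DD b 0 y - 1) := by
    intro y
    have : Tgel * (m1 * y + DD b 0 y - 1) = (Tgel * m1) * y + Tgel * (DD b 0 y - 1) := by ring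
    rw [this, hτm, one_mul]
  have hφpos : ∀ y, 0 < y → 0 < φ y := fun y hy => by
    rw [hφeq]; exact mul_pos hτ (phi_pos hb hbs hm1' hk0 hy)
  set p : ℝ → ℝ := fun y => 1 - Tgel * DD b 1 y with hp
  have hpeq : ∀ y, p y = Tgel * (m1 - DD b 1 y) := by
    intro y
    rw [mul_sub, hτm]
  have hpge : ∀ y Y, 0 < y → y ≤ Y → Tgel * (b k0 * Real.exp (-Y)) * y ≤ p y := by
    intro y Y hy hyY
    rw [hpeq, mul_assoc]
    exact mul_le_mul_of_nonneg_left (p_ge hb hbs hm1' k0 hy hyY) hτ.le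
  have hppos : ∀ y, 0 < y → 0 < p y := fun y hy =>
    lt_of_lt_of_le (by positivity) (hpge y y hy le_rfl)
  have hφd : ∀ y, 0 < y → HasDerivAt φ (p y) y := fun y hy => by
    have h := (hasDerivAt_id y).add (((DD_hasDerivAt hb hbs 0 hy).sub_const 1).const_mul Tgel)
    exact h.congr_deriv (by simp only [hp]; ring)
  have hpd : ∀ y, 0 < y → HasDerivAt p (Tgel * DD b 2 y) y := fun y hy => by
    have h := ((DD_hasDerivAt hb hbs 1 hy).const_mul Tgel).const_sub 1
    exact h.congr_deriv (by ring)
  have hVle : ∀ y, 0 < y → DD b 0 y - 1 ≤ 0 := fun y hy => by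
    have := DD_le hb hbs 0 hy le_rfl
    norm_num at this
    linarith
  have hchar : ∀ y, 0 < y → DD u 0 (φ y) = DD b 0 y := fun y hy => by
    have := characteristics ha hs heq' hτ.le (x0 := y) rfl (hVle y hy) (hφpos y hy)
    simp only [hφ]
    linarith
  have hchar1 : ∀ y, 0 < y → DD u 1 (φ y) * p y = DD b 1 y := fun y hy => by
    have h1 := (DD_hasDerivAt hu hus 0 (hφpos y hy)).comp y (hφd y hy)
    have := uniq_deriv hy hchar h1 (DD_hasDerivAt hb hbs 0 hy)
    norm_num at this
    exact this
  have hchar2 : ∀ y, 0 < y → DD u 2 (φ y) * p y ^ 3 = DD b 2 y := fun y hy => by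
    have h1 := ((DD_hasDerivAt hu hus 1 (hφpos y hy)).comp y (hφd y hy)).mul (hpd y hy)
    have h2 := uniq_deriv hy hchar1 h1 (DD_hasDerivAt hb hbs 1 hy)
    norm_num at h2
    have h3 := hchar1 y hy
    have h4 : p y = 1 - Tgel * DD b 1 y := rfl
    linear_combination (-p y) * h2 + Tgel * DD b 2 y * h3 + DD b 2 y * h4
  have hE : ∀ y, 0 < y → EFun v Tgel (φ y) = DD b 1 y ^ 3 / DD b 2 y := fun y hy => by
    rw [EFun_eq v Tgel hu hus (hφpos y hy)]
    change DD u 1 (φ y) ^ 3 / DD u 2 (φ y) = _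
    have hpp := (hppos y hy).ne'
    rw [← hchar1 y hy, ← hchar2 y hy, mul_pow, mul_div_mul_right _ _ (pow_ne_zero 3 hpp)]
  intro xbar hxbar
  set Y := xbar + Tgel with hY
  set c := b k0 * Real.exp (-((k0:ℝ)+1) * Y) with hc
  have hcpos : 0 < c := by positivity
  set K := 3 * m1 ^ 2 + m1 ^ 3 * m3 / c ^ 2 with hK
  have hKnn : 0 ≤ K := by positivity
  set q := Tgel * (b k0 * Real.exp (-Y)) with hq
  have hqpos : 0 < q := by positivity
  refine ⟨K * √(Tgel * m2) / q, ?_⟩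
  intro x hx
  -- find the preimage
  obtain ⟨y, hyI, hyx⟩ : ∃ y ∈ Icc x (x + Tgel), φ y = x := by
    have hcont : ContinuousOn φ (Icc x (x + Tgel)) := fun z hz =>
      (hφd z (hx.1.trans_le hz.1)).continuousAt.continuousWithinAt
    have := intermediate_value_Icc (by linarith : x ≤ x + Tgel) hcont
    refine this ⟨?_, ?_⟩
    · have := mul_nonneg hτ.le (neg_nonneg.2 (hVle x hx.1))
      simp only [hφ]; linarith
    · have := mul_nonneg hτ.le (DD_nonneg hb 0 (x + Tgel))
      simp only [hφ]; linarith
  have hy : 0 < y := hx.1.trans_le hyI.1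
  have hyY : y ≤ Y := hyI.2.trans (by rw [hY]; linarith [hx.2])
  have hrp : 0 ≤ x ^ (-(1:ℝ)/2) := Real.rpow_nonneg hx.1.le _
  by_cases hdiff : DifferentiableAt ℝ (fun y => EFun v Tgel y) x
  swap
  · rw [deriv_zero_of_not_differentiableAt hdiff, abs_zero]
    positivity
  set G := deriv (fun y => EFun v Tgel y) x with hG
  have hB2 : c ≤ DD b 2 y := DD_ge hb hbs 2 k0 hy hyY
  have hB2pos : 0 < DD b 2 y := hcpos.trans_le hB2
  have hGd : G * p y = (-3 * DD b 1 y ^ 2 + DD b 1 y ^ 3 * DD b 3 y / DD b 2 y ^ 2) := by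
    have h1 : HasDerivAt (fun y => EFun v Tgel y) G (φ y) := by
      rw [hyx]; exact hdiff.hasDerivAt
    have h2 := h1.comp y (hφd y hy)
    have h3 := ((DD_hasDerivAt hb hbs 1 hy).pow 3).div (DD_hasDerivAt hb hbs 2 hy) hB2pos.ne'
    have := uniq_deriv hy hE h2 h3
    rw [this]
    simp only [Pi.pow_apply]
    field_simp
    norm_num
    ring
  have hD1 : DD b 1 y ≤ m1 := by
    have := DD_le_moment hb hbs 1 (by simpa using hm1') hy
    simpa using this
  have hD3 : DD b 3 y ≤ m3 := DD_le_moment hb hbs 3 hm3 hy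
  have hD1n := DD_nonneg hb 1 y
  have hD3n := DD_nonneg hb 3 y
  have hGb : |G| * p y ≤ K := by
    rw [← abs_of_pos (hppos y hy), ← abs_mul, hGd]
    refine (abs_add_le _ _).trans ?_
    rw [hK]
    refine add_le_add ?_ ?_
    · rw [abs_mul, abs_of_nonneg (sq_nonneg (DD b 1 y))]
      norm_num
      gcongr
    · rw [abs_of_nonneg (by positivity)]
      gcongr
  have hxy : √x ≤ √(Tgel * m2) * y := by
    have : x ≤ Tgel * m2 * y ^ 2 := by
      rw [← hyx, hφeq, mul_assoc]
      exact mul_le_mul_of_nonneg_left (phi_le hb hbs hm1' hm2 hy) hτ.le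
    calc √x ≤ √(Tgel * m2 * y ^ 2) := Real.sqrt_le_sqrt this
      _ = _ := by rw [Real.sqrt_mul (by positivity), Real.sqrt_sq hy.le]
  have hsx : 0 < √x := Real.sqrt_pos.2 hx.1
  have hrx : x ^ (-(1:ℝ)/2) = (√x)⁻¹ := by
    rw [Real.sqrt_eq_rpow, ← Real.rpow_neg hx.1.le]; norm_num
  rw [hrx, ← div_eq_mul_inv, le_div_iff₀ hsx, le_div_iff₀ hqpos]
  have hfin : |G| * (q * y) ≤ K :=
    (mul_le_mul_of_nonneg_left (hpge y Y hy hyY) (abs_nonneg G)).trans hGb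
  calc |G| * √x * q ≤ |G| * (√(Tgel * m2) * y) * q := by gcongr
    _ = (|G| * (q * y)) * √(Tgel * m2) := by ring
    _ ≤ K * √(Tgel * m2) := by gcongr
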